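/- Let n ≥ 4 be an even integer and let d̃ be the sequence consisting of two entries equal to n followed by n−2 entries equal to n/2. Then the minimum of TotMult(H) over all multigraph realizations H of d̃ whose underlying simple graph is bipartite equals n/2; moreover, every such bipartite multigraph realization H with TotMult(H) = n/2 satisfies MaxMult(H) ≥ n/2 + 1. -/

import Mathlib

/-!
Write `n = 2 * k`. The degree sum of a realization is `2 * k * (k + 1)`, so across a bipartition
`(S, Sᶜ)` there are exactly `k * (k + 1)` edges, counted with multiplicity, while
`|S| * |Sᶜ| ≤ k ^ 2` because `|S| + |Sᶜ| = 2 * k`. Hence the excess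
`∑ (m v u - 1)` over the pairs of `S × Sᶜ`, which is `totMult`, is at least `k`.

If the excess is exactly `k`, then `|S| = |Sᶜ| = k` and the underlying graph is complete bipartite.
Each side has degree sum `k * (k + 1) > k * k`, so it contains a vertex of degree `2 * k`; call them
`a ∈ S` and `b ∉ S`. The edges at `a` have total excess `k`, and so do the edges at `b`. As the
whole excess is only `k`, all of it sits on the pair `a b`, whose multiplicity is thus `k + 1`.

The minimum is attained by `K_{k,k}` with one edge taken `k + 1` times; this is `extremal` below,
with the parity classes as sides and `0`, `1` as the vertices of large degree.
-/


/-- A loopless multigraph on vertex set `Fin N`, given by symmetric edge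
multiplicities with zero diagonal; `m v u` is the number of parallel edges
between `v` and `u`. -/
structure Multigraph (N : ℕ) where
  m : Fin N → Fin N → ℕ
  symm : ∀ v u, m v u = m u v
  loopless : ∀ v, m v v = 0

namespace Multigraph

variable {N : ℕ}

/-- The degree of a vertex. -/
def deg (H : Multigraph N) (v : Fin N) : ℕ := ∑ u, H.m v u

/-- `H` realizes the sequence `d 1, d 2, …, d n` (1-indexed): the multiset of
vertex degrees equals the multiset of entries of the sequence. -/
def Realizes (H : Multigraph N) (n : ℕ) (d : ℕ → ℕ) : Prop :=
  Multiset.map H.deg Finset.univ.val = Multiset.map d (Finset.Icc 1 n).val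

/-- Total multiplicity: the number of excess edge copies, summed over unordered
pairs of vertices (pairs with multiplicity `0` contribute `0`). -/
def totMult (H : Multigraph N) : ℕ :=
  ∑ v : Fin N, ∑ u ∈ Finset.univ.filter (fun u => v < u), (H.m v u - 1)

/-- Maximum multiplicity: the largest number of parallel edges between any two
vertices. -/
def maxMult (H : Multigraph N) : ℕ :=
  Finset.univ.sup fun p : Fin N × Fin N => H.m p.1 p.2

/-- All multiplicities are at most `1`, i.e. `H` is a simple graph. -/
def Simple (H : Multigraph N) : Prop := ∀ v u, H.m v u ≤ 1

/-- The underlying simple graph of `H` is bipartite: the vertices can be split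
into two classes such that every edge crosses between the classes. -/
def Bipartite (H : Multigraph N) : Prop :=
  ∃ S : Set (Fin N), ∀ v u, 1 ≤ H.m v u → (v ∈ S ↔ u ∉ S)

end Multigraph

namespace Multigraph

variable {N : ℕ}

/-! ### Double counting -/

/-- Summing the excess over ordered pairs counts every unordered pair twice. -/
lemma two_mul_totMult (H : Multigraph N) :
    2 * H.totMult = ∑ v, ∑ u, (H.m v u - 1) := by
  have h1 : ∀ v u, H.m v u - 1 =
      (if v < u then H.m v u - 1 else 0) + (if u < v then H.m u v - 1 else 0) := by
    intro v u
    rcases lt_trichotomy v u with h | h | h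
    · simp [h, h.not_gt]
    · subst h; simp [H.loopless]
    · simp [h, h.not_gt, H.symm v u]
  have h2 : H.totMult = ∑ v, ∑ u, (if v < u then H.m v u - 1 else 0) := by
    simp only [totMult, Finset.sum_filter]
  have h3 : ∑ v, ∑ u, (H.m v u - 1) =
      ∑ v, ∑ u, ((if v < u then H.m v u - 1 else 0) + (if u < v then H.m u v - 1 else 0)) :=
    Finset.sum_congr rfl fun v _ => Finset.sum_congr rfl fun u _ => h1 v u
  rw [h3]
  simp only [Finset.sum_add_distrib]
  rw [Finset.sum_comm (f := fun v u => if u < v then H.m u v - 1 else 0), ← h2]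
  ring

/-- If `f` vanishes on pairs inside `S` and on pairs inside `Sᶜ`, the sum of `f` over all ordered
pairs is twice its sum over `S × Sᶜ`. -/
lemma sum_sum_eq_two_mul_cross (f : Fin N → Fin N → ℕ) (hf : ∀ v u, f v u = f u v)
    (S : Finset (Fin N)) (h0 : ∀ v u, (v ∈ S ↔ u ∈ S) → f v u = 0) :
    ∑ v, ∑ u, f v u = 2 * ∑ v ∈ S, ∑ u ∈ Sᶜ, f v u := by
  have hS : ∀ v ∈ S, ∑ u, f v u = ∑ u ∈ Sᶜ, f v u := by
    intro v hv
    rw [← Finset.sum_add_sum_compl S, Finset.sum_eq_zero, zero_add]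
    intro u hu
    exact h0 v u (by simp [hv, hu])
  have hT : ∀ v ∈ Sᶜ, ∑ u, f v u = ∑ u ∈ S, f v u := by
    intro v hv
    rw [← Finset.sum_add_sum_compl S, Finset.sum_eq_zero (s := Sᶜ), add_zero]
    intro u hu
    rw [Finset.mem_compl] at hu hv
    exact h0 v u (by simp [hv, hu])
  rw [← Finset.sum_add_sum_compl S, Finset.sum_congr rfl hS, Finset.sum_congr rfl hT,
    Finset.sum_comm (s := Sᶜ), two_mul]
  simp only [hf]

/-! ### Degrees of a realization -/

/-- What is used of a realization: it has `2 * k` vertices, every degree is `k` or `2 * k`, and the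
degree sum is `2 * (k * (k + 1))`. -/
lemma Realizes.basic {k : ℕ} (hk : 2 ≤ k) {H : Multigraph N}
    (h : H.Realizes (2 * k) (fun i => if i ≤ 2 then 2 * k else k)) :
    N = 2 * k ∧ (∀ v, H.deg v = k ∨ H.deg v = 2 * k) ∧ ∑ v, H.deg v = 2 * (k * (k + 1)) := by
  unfold Realizes at h
  refine ⟨by simpa using congrArg Multiset.card h, ?_, ?_⟩
  · intro v
    have hv : H.deg v ∈ Multiset.map H.deg Finset.univ.val :=
      Multiset.mem_map_of_mem _ (Finset.mem_univ v)
    rw [h, Multiset.mem_map] at hv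
    obtain ⟨i, -, hi⟩ := hv
    grind
  · have hs : ∑ v, H.deg v = ∑ i ∈ Finset.Icc 1 (2 * k), (if i ≤ 2 then 2 * k else k) :=
      congrArg Multiset.sum h
    have hd : ∀ i : ℕ, (if i ≤ 2 then 2 * k else k) = k + (if i ≤ 2 then k else 0) := by
      intro i; split_ifs <;> omega
    have hf : (Finset.Icc 1 (2 * k)).filter (fun i => i ≤ 2) = Finset.Icc 1 2 := by
      ext i; simp only [Finset.mem_filter, Finset.mem_Icc]; omega
    rw [hs]
    simp only [hd, Finset.sum_add_distrib, ← Finset.sum_filter, hf]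
    simp
    ring

/-! ### The extremal multigraph -/

/-- The complete bipartite graph between the even and the odd numbers below `2 * k`, with the
edge `{0, 1}` taken `k + 1` times. The condition `v + u = 1` says `{v, u} = {0, 1}`. -/
def extremal (k : ℕ) : Multigraph (2 * k) where
  m v u := (if v.val % 2 = u.val % 2 then 0 else 1) + (if v.val + u.val = 1 then k else 0)
  symm v u := by simp only [eq_comm, add_comm]
  loopless v := by
    have : v.val + v.val ≠ 1 := by omega
    simp [this]

lemma sum_parity (k a : ℕ) :
    ∑ u ∈ Finset.range (2 * k), (if a % 2 = u % 2 then 0 else 1) = k := by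
  induction k with
  | zero => simp
  | succ k ih =>
    rw [show 2 * (k + 1) = 2 * k + 1 + 1 by ring, Finset.sum_range_succ, Finset.sum_range_succ, ih]
    split_ifs <;> omega

lemma sum_special {k : ℕ} (hk : 2 ≤ k) (a : ℕ) :
    ∑ u ∈ Finset.range (2 * k), (if a + u = 1 then k else 0) = if a ≤ 1 then k else 0 := by
  split_ifs with h
  · rw [Finset.sum_eq_single (1 - a)]
    · simp [h]
    · intro b _ hb
      rw [if_neg (by omega)]
    · intro hb
      simp only [Finset.mem_range] at hb
      omega
  · exact Finset.sum_eq_zero fun u _ => if_neg (by omega)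

lemma extremal_deg {k : ℕ} (hk : 2 ≤ k) (v : Fin (2 * k)) :
    (extremal k).deg v = if v.val + 1 ≤ 2 then 2 * k else k := by
  have h : (extremal k).deg v = ∑ u ∈ Finset.range (2 * k),
      ((if v.val % 2 = u % 2 then 0 else 1) + (if v.val + u = 1 then k else 0)) :=
    Fin.sum_univ_eq_sum_range
      (fun u => (if v.val % 2 = u % 2 then 0 else 1) + (if v.val + u = 1 then k else 0)) (2 * k)
  rw [h, Finset.sum_add_distrib, sum_parity, sum_special hk]
  split_ifs <;> omega

lemma extremal_realizes {k : ℕ} (hk : 2 ≤ k) :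
    (extremal k).Realizes (2 * k) (fun i => if i ≤ 2 then 2 * k else k) := by
  have hI : Finset.Icc 1 (2 * k) = (Finset.univ : Finset (Fin (2 * k))).map
      ⟨fun i => i.val + 1, fun i j h => Fin.ext (by simpa using h)⟩ := by
    ext i
    simp only [Finset.mem_Icc, Finset.mem_map, Finset.mem_univ, true_and]
    constructor
    · intro h
      exact ⟨⟨i - 1, by omega⟩, Nat.sub_add_cancel h.1⟩
    · rintro ⟨j, rfl⟩
      exact ⟨Nat.le_add_left 1 j.val, j.isLt⟩
  unfold Realizes
  rw [hI, Finset.map_val, Multiset.map_map]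
  exact Multiset.map_congr rfl fun v _ => extremal_deg hk v

lemma extremal_bipartite (k : ℕ) : (extremal k).Bipartite := by
  refine ⟨{v | v.val % 2 = 0}, fun v u h => ?_⟩
  simp only [extremal] at h
  simp only [Set.mem_ofPred_eq]
  split_ifs at h <;> omega

lemma extremal_totMult {k : ℕ} (hk : 2 ≤ k) : (extremal k).totMult = k := by
  have h := two_mul_totMult (extremal k)
  have hm : ∀ v u, (extremal k).m v u - 1 = if v.val + u.val = 1 then k else 0 := by
    intro v u
    simp only [extremal]
    split_ifs <;> omega
  have hrow : ∀ v : Fin (2 * k), (∑ u : Fin (2 * k), if v.val + u.val = 1 then k else 0) =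
      if v.val ≤ 1 then k else 0 := fun v =>
    (Fin.sum_univ_eq_sum_range (fun u => if v.val + u = 1 then k else 0) (2 * k)).trans
      (sum_special hk v.val)
  have hcol : (∑ v : Fin (2 * k), if v.val ≤ 1 then k else 0) = 2 * k := by
    have hf : (Finset.range (2 * k)).filter (fun i => i ≤ 1) = Finset.range 2 := by
      ext i; simp only [Finset.mem_filter, Finset.mem_range]; omega
    rw [Fin.sum_univ_eq_sum_range (fun v => if v ≤ 1 then k else 0) (2 * k),
      ← Finset.sum_filter, hf]
    simp
  simp only [hm, hrow, hcol] at h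
  omega

/-! ### The lower bounds -/

/-- The bipartition turned into a finset `S`, with both `deg` and `totMult` expressed through the
pairs in `S × Sᶜ`. -/
lemma Bipartite.exists_cross {H : Multigraph N} (hb : H.Bipartite) :
    ∃ S : Finset (Fin N),
      (∀ v ∈ S, H.deg v = ∑ u ∈ Sᶜ, H.m v u) ∧
      (∀ u ∈ Sᶜ, H.deg u = ∑ v ∈ S, H.m v u) ∧
      ∑ v, H.deg v = 2 * ∑ v ∈ S, ∑ u ∈ Sᶜ, H.m v u ∧
      H.totMult = ∑ v ∈ S, ∑ u ∈ Sᶜ, (H.m v u - 1) := by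
  classical
  obtain ⟨S₀, hS₀⟩ := hb
  have h0 : ∀ v u, (v ∈ S₀.toFinset ↔ u ∈ S₀.toFinset) → H.m v u = 0 := by
    intro v u h
    by_contra hne
    have := hS₀ v u (Nat.one_le_iff_ne_zero.2 hne)
    simp only [Set.mem_toFinset] at h
    tauto
  refine ⟨S₀.toFinset, ?_, ?_, sum_sum_eq_two_mul_cross H.m H.symm _ h0, ?_⟩
  · intro v hv
    rw [deg, ← Finset.sum_add_sum_compl S₀.toFinset, Finset.sum_eq_zero, zero_add]
    exact fun u hu => h0 v u (by simp only [hv, hu])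
  · intro u hu
    rw [deg, ← Finset.sum_add_sum_compl S₀.toFinset, Finset.sum_eq_zero (s := S₀.toFinsetᶜ),
      add_zero]
    · exact Finset.sum_congr rfl fun v _ => H.symm u v
    · intro w hw
      rw [Finset.mem_compl] at hu hw
      exact h0 u w (by simp only [hu, hw])
  · have h1 := two_mul_totMult H
    rw [sum_sum_eq_two_mul_cross (fun v u => H.m v u - 1) (fun v u => by rw [H.symm]) S₀.toFinset
      (fun v u h => by simp [h0 v u h])] at h1
    omega

/-- Truncation in `m - 1` only makes the excess larger than `∑ m - |S| * |T|`. -/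
lemma sum_le_excess_add_card (H : Multigraph N) (S T : Finset (Fin N)) :
    ∑ v ∈ S, ∑ u ∈ T, H.m v u ≤ ∑ v ∈ S, ∑ u ∈ T, (H.m v u - 1) + S.card * T.card := by
  calc ∑ v ∈ S, ∑ u ∈ T, H.m v u ≤ ∑ v ∈ S, ∑ u ∈ T, ((H.m v u - 1) + 1) :=
        Finset.sum_le_sum fun v _ => Finset.sum_le_sum fun u _ => by omega
    _ = _ := by simp [Finset.sum_add_distrib]

lemma le_totMult {k : ℕ} (hk : 2 ≤ k) {H : Multigraph N}
    (h : H.Realizes (2 * k) (fun i => if i ≤ 2 then 2 * k else k)) (hb : H.Bipartite) :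
    k ≤ H.totMult := by
  obtain ⟨hN, -, hsum⟩ := h.basic hk
  obtain ⟨S, -, -, hcross, htot⟩ := hb.exists_cross
  have hle := sum_le_excess_add_card H S Sᶜ
  have hcard : S.card + Sᶜ.card = 2 * k := by
    rw [Finset.card_add_card_compl, Fintype.card_fin, hN]
  rw [← htot] at hle
  have h1 : k * (k + 1) ≤ H.totMult + S.card * Sᶜ.card := by omega
  -- The product of the two sizes is at most `k ^ 2`, since their sum is `2 * k`.
  zify at *
  nlinarith [sq_nonneg ((S.card : ℤ) - Sᶜ.card)]

lemma le_maxMult {k : ℕ} (hk : 2 ≤ k) {H : Multigraph N}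
    (h : H.Realizes (2 * k) (fun i => if i ≤ 2 then 2 * k else k)) (hb : H.Bipartite)
    (hk' : H.totMult = k) : k + 1 ≤ H.maxMult := by
  obtain ⟨hN, hdeg, hsum⟩ := h.basic hk
  obtain ⟨S, hS, hT, hcross, htot⟩ := hb.exists_cross
  have hle := sum_le_excess_add_card H S Sᶜ
  have hcard : S.card + Sᶜ.card = 2 * k := by
    rw [Finset.card_add_card_compl, Fintype.card_fin, hN]
  rw [← htot, hk'] at hle
  have h1 : k * (k + 1) ≤ k + S.card * Sᶜ.card := by omega
  -- The product of the two sizes is now at least `k ^ 2`, which forces equality in AM-GM.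
  have hSk : S.card = k := by
    have h2 : ((S.card : ℤ) - k) ^ 2 ≤ 0 := by
      zify at *
      nlinarith
    have h3 : ((S.card : ℤ) - k) = 0 := by
      nlinarith [sq_nonneg ((S.card : ℤ) - k), pow_eq_zero_iff (two_ne_zero) |>.1
        (le_antisymm h2 (sq_nonneg ((S.card : ℤ) - k)))]
    omega
  have hTk : Sᶜ.card = k := by omega
  have hE : ∑ v ∈ S, ∑ u ∈ Sᶜ, H.m v u = k * (k + 1) := by omega
  -- A side whose degrees were all `k` would have degree sum only `k * k`.
  have hbig : ∀ A : Finset (Fin N), A.card = k → ∑ v ∈ A, H.deg v = k * (k + 1) →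
      ∃ a ∈ A, H.deg a = 2 * k := by
    intro A hA hAs
    by_contra! hno
    have : ∑ v ∈ A, H.deg v = ∑ v ∈ A, k :=
      Finset.sum_congr rfl fun v hv => (hdeg v).resolve_right (hno v hv)
    rw [hAs, Finset.sum_const, hA, smul_eq_mul] at this
    nlinarith
  obtain ⟨a, ha, hda⟩ := hbig S hSk (by rw [Finset.sum_congr rfl hS, hE])
  obtain ⟨b, hb, hdb⟩ := hbig Sᶜ hTk (by rw [Finset.sum_congr rfl hT, Finset.sum_comm, hE])
  -- The excess at `a` and the excess at `b` are each at least `2 * k - k`.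
  have hra : k ≤ ∑ u ∈ Sᶜ, (H.m a u - 1) := by
    have := sum_le_excess_add_card H {a} Sᶜ
    simp only [Finset.sum_singleton, Finset.card_singleton] at this
    rw [← hS a ha] at this
    omega
  have hrb : k ≤ ∑ v ∈ S, (H.m v b - 1) := by
    have := sum_le_excess_add_card H S {b}
    simp only [Finset.sum_singleton, Finset.card_singleton] at this
    rw [← hT b hb] at this
    omega
  rw [← Finset.add_sum_erase S _ ha] at htot hrb
  have hrest : ∑ v ∈ S.erase a, (H.m v b - 1) ≤ ∑ v ∈ S.erase a, ∑ u ∈ Sᶜ, (H.m v u - 1) :=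
    Finset.sum_le_sum fun v _ =>
      Finset.single_le_sum (f := fun u => H.m v u - 1) (fun _ _ => Nat.zero_le _) hb
  -- Row `a` and column `b` share only the pair `a b`, so its excess is at least `k + k - k`.
  have hab : k + 1 ≤ H.m a b := by omega
  exact hab.trans
    (Finset.le_sup (f := fun p : Fin N × Fin N => H.m p.1 p.2) (Finset.mem_univ (a, b)))

end Multigraph

/-- Let `n ≥ 4` be even and let `d̃` be the sequence with two
entries `n` followed by `n−2` entries `n/2`. The minimum of `TotMult` over all
multigraph realizations of `d̃` whose underlying simple graph is bipartite
equals `n/2`, and every such bipartite realization attaining total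
multiplicity `n/2` has maximum multiplicity at least `n/2 + 1`. -/
theorem stmt7 (n : ℕ) (hn : 4 ≤ n) (hne : Even n) :
    IsLeast {k : ℕ | ∃ (N : ℕ) (H : Multigraph N),
        H.Realizes n (fun i => if i ≤ 2 then n else n / 2) ∧ H.Bipartite ∧
          H.totMult = k} (n / 2) ∧
      ∀ (N : ℕ) (H : Multigraph N),
        H.Realizes n (fun i => if i ≤ 2 then n else n / 2) → H.Bipartite →
          H.totMult = n / 2 → n / 2 + 1 ≤ H.maxMult := by
  obtain ⟨k, rfl⟩ := even_iff_exists_two_mul.1 hne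
  have hk : 2 ≤ k := by omega
  rw [Nat.mul_div_cancel_left k two_pos]
  refine ⟨⟨⟨2 * k, Multigraph.extremal k, Multigraph.extremal_realizes hk,
    Multigraph.extremal_bipartite k, Multigraph.extremal_totMult hk⟩, ?_⟩, ?_⟩
  · rintro _ ⟨N, H, hr, hb, rfl⟩
    exact Multigraph.le_totMult hk hr hb
  · exact fun N H hr hb ht => Multigraph.le_maxMult hk hr hb ht
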